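/- arXiv:2603.18674 — 6 statements merged into one kernel-verified Lean document; each statement's English description precedes it below -/
import Mathlib

section
/- For every n ≥ 3, the 2-tone chromatic number of the cycle C_n equals 6 if n ∈ {3, 4, 7}, and equals 5 otherwise. -/
/-- A `t`-tone `k`-coloring of a simple graph `G`: each vertex gets a set of `t`
distinct colors from `{1,…,k}`, and any two distinct vertices in the same
connected component share fewer colors than their distance. -/
def IsTToneColoring {V : Type*} (G : SimpleGraph V) (t k : ℕ) (f : V → Finset ℕ) : Prop :=
  (∀ v, f v ⊆ Finset.Icc 1 k ∧ (f v).card = t) ∧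
  ∀ u v : V, u ≠ v → G.Reachable u v → ((f u) ∩ (f v)).card < G.dist u v

/-- The `t`-tone chromatic number: the least `k` admitting a `t`-tone `k`-coloring. -/
noncomputable def toneNumber {V : Type*} (G : SimpleGraph V) (t : ℕ) : ℕ :=
  sInf {k | ∃ f : V → Finset ℕ, IsTToneColoring G t k f}

/-!
A `2`-tone coloring is a map to pairs of colors such that adjacent vertices get disjoint pairs and
distinct vertices with a common neighbor get different pairs. On a cycle this is a condition on
consecutive triples, so closed words of pairs that start with the same two pairs can be
concatenated. Words of lengths 5, 6, 8 and 9 on five colors thus give all lengths except 3, 4, 7.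

Five colors are always needed: the outer pairs of a path of length two have at least three colors
between them, and the middle pair is disjoint from both. For `n ∈ {3, 4, 7}` a sixth color is
forced by double counting: a color class `S` is an independent set of `C_n`, so `S`, `S + 1` and
`(S + 2) \ S` are disjoint, which makes a large class contain many pairs at distance two, whereas
each of the `n` such pairs is in at most one color class.
-/

open Finset SimpleGraph

section ToneColoring

variable {V : Type*} {G : SimpleGraph V} {t k : ℕ} {f : V → Finset ℕ} {u v w : V}

theorem toneNumber_eq (hk : ∃ f, IsTToneColoring G t k f)
    (hmin : ∀ l f, IsTToneColoring G t l f → k ≤ l) : toneNumber G t = k :=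
  IsLeast.csInf_eq ⟨hk, fun l ⟨f, hf⟩ => hmin l f hf⟩

namespace IsTToneColoring

theorem disjoint_of_adj (hf : IsTToneColoring G t k f) (huv : G.Adj u v) :
    Disjoint (f u) (f v) := by
  have hlt := hf.2 u v huv.ne huv.reachable
  rw [dist_eq_one_iff_adj.2 huv, Nat.lt_one_iff, card_eq_zero] at hlt
  exact disjoint_iff_inter_eq_empty.2 hlt

theorem card_inter_le_one (hf : IsTToneColoring G t k f) (huw : G.Adj u w) (hwv : G.Adj w v)
    (huv : u ≠ v) : #(f u ∩ f v) ≤ 1 := by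
  have hlt := hf.2 u v huv (huw.reachable.trans hwv.reachable)
  have hdist : G.dist u v ≤ 2 := dist_le (.cons huw (.cons hwv .nil))
  omega

theorem three_mul_le_add_one (hf : IsTToneColoring G t k f) (huw : G.Adj u w) (hwv : G.Adj w v)
    (huv : u ≠ v) : 3 * t ≤ k + 1 := by
  have hdisj : Disjoint (f u ∪ f v) (f w) :=
    disjoint_union_left.2 ⟨hf.disjoint_of_adj huw, (hf.disjoint_of_adj hwv).symm⟩
  have hsub : f u ∪ f v ∪ f w ⊆ Icc 1 k :=
    union_subset (union_subset (hf.1 u).1 (hf.1 v).1) (hf.1 w).1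
  have hcard : #(f u ∪ f v) + #(f w) ≤ k := by
    simpa only [card_union_of_disjoint hdisj, Nat.card_Icc, Nat.add_sub_cancel]
      using card_le_card hsub
  have hinter := hf.card_inter_le_one huw hwv huv
  have hunion := card_union_add_card_inter (f u) (f v)
  rw [(hf.1 u).2, (hf.1 v).2] at hunion
  rw [(hf.1 w).2] at hcard
  omega

end IsTToneColoring

theorem card_inter_lt_of_ne_of_card_eq {α : Type*} [DecidableEq α] {s t : Finset α}
    (hne : s ≠ t) (hcard : #s = #t) : #(s ∩ t) < #s :=
  card_lt_card <| inter_subset_left.ssubset_of_ne fun h =>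
    hne (eq_of_subset_of_card_le (inter_eq_left.1 h) hcard.ge)

theorem isTToneColoring_two_of_adj (hmem : ∀ v, f v ∈ powersetCard 2 (Icc 1 k))
    (hadj : ∀ u v, G.Adj u v → Disjoint (f u) (f v))
    (hne : ∀ u w v, G.Adj u w → G.Adj w v → u ≠ v → f u ≠ f v) :
    IsTToneColoring G 2 k f := by
  simp only [mem_powersetCard] at hmem
  refine ⟨hmem, fun u v huv hreach => ?_⟩
  by_cases huv_adj : G.Adj u v
  · simp [disjoint_iff_inter_eq_empty.1 (hadj u v huv_adj), dist_eq_one_iff_adj.2 huv_adj]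
  have htwo : 2 ≤ G.dist u v := hreach.one_lt_dist_of_ne_of_not_adj huv huv_adj
  obtain hcommon | ⟨w, huw, hvw⟩ := (G.commonNeighbors u v).eq_empty_or_nonempty
  · have hthree : 2 < G.dist u v := by
      have := two_lt_edist_iff.2 ⟨huv, huv_adj, hcommon⟩
      rw [← hreach.coe_dist_eq_edist] at this
      exact_mod_cast this
    calc #(f u ∩ f v) ≤ #(f u) := card_le_card inter_subset_left
      _ = 2 := (hmem u).2
      _ < G.dist u v := hthree
  · calc #(f u ∩ f v) < #(f u) := card_inter_lt_of_ne_of_card_eq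
          (hne u w v huw hvw.symm huv) ((hmem u).2.trans (hmem v).2.symm)
      _ = 2 := (hmem u).2
      _ ≤ G.dist u v := htwo

end ToneColoring

section CycleGraph

variable {n : ℕ} [NeZero n]

theorem cycleGraph_adj_iff_eq_add_one (hn : 2 ≤ n) {i j : Fin n} :
    (cycleGraph n).Adj i j ↔ i = j + 1 ∨ j = i + 1 := by
  obtain ⟨m, rfl⟩ := Nat.exists_eq_add_of_le' hn
  rw [cycleGraph_adj, sub_eq_iff_eq_add', sub_eq_iff_eq_add']

theorem cycleGraph_adj_add_one (hn : 2 ≤ n) (i : Fin n) : (cycleGraph n).Adj i (i + 1) :=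
  (cycleGraph_adj_iff_eq_add_one hn).2 (.inr rfl)

theorem fin_ne_add_one_add_one (hn : 3 ≤ n) (i : Fin n) : i ≠ i + 1 + 1 := by
  obtain ⟨m, rfl⟩ := Nat.exists_eq_add_of_le' hn
  rw [add_assoc, ne_eq, left_eq_add, Fin.ext_iff]
  simp [Fin.val_add, Nat.mod_eq_of_lt]

end CycleGraph

section CyclicWord

variable {α : Type*} {m n : ℕ} [NeZero m] [NeZero n]

theorem fin_add_one_eq_zero {i : Fin n} (hi : i.val + 1 = n) : i + 1 = 0 := by
  ext
  simp [Fin.val_add, hi]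

theorem castAdd_add_one_eq_or (i : Fin m) :
    Fin.castAdd n i + 1 = Fin.castAdd n (i + 1) ∨
      Fin.castAdd n i + 1 = Fin.natAdd m 0 ∧ i + 1 = 0 := by
  have hn : 0 < n := NeZero.pos n
  have hval : (Fin.castAdd n i + 1).val = i + 1 := Fin.val_add_one_of_lt' (by
    rw [Fin.val_castAdd]; omega)
  obtain hi | hi : i.val + 1 < m ∨ i.val + 1 = m := by omega
  · left
    ext
    rw [hval, Fin.val_castAdd, Fin.val_add_one_of_lt' hi]
  · refine .inr ⟨?_, fin_add_one_eq_zero hi⟩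
    ext
    simp [hval, hi]

theorem natAdd_add_one_eq_or (i : Fin n) :
    Fin.natAdd m i + 1 = Fin.natAdd m (i + 1) ∨
      Fin.natAdd m i + 1 = Fin.castAdd n 0 ∧ i + 1 = 0 := by
  obtain hi | hi : i.val + 1 < n ∨ i.val + 1 = n := by omega
  · left
    ext
    rw [Fin.val_add_one_of_lt' (by rw [Fin.val_natAdd]; omega), Fin.val_natAdd, Fin.val_natAdd,
      Fin.val_add_one_of_lt' hi, add_assoc]
  · refine .inr ⟨?_, fin_add_one_eq_zero hi⟩
    rw [fin_add_one_eq_zero (by rw [Fin.val_natAdd]; omega)]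
    ext
    simp

variable {f : Fin m → α} {g : Fin n → α}

theorem append_castAdd_add_one (h₀ : f 0 = g 0) (i : Fin m) :
    Fin.append f g (Fin.castAdd n i + 1) = f (i + 1) := by
  obtain h | ⟨h, hi⟩ := castAdd_add_one_eq_or (n := n) i
  · rw [h, Fin.append_left]
  · rw [h, hi, Fin.append_right, h₀]

theorem append_natAdd_add_one (h₀ : f 0 = g 0) (i : Fin n) :
    Fin.append f g (Fin.natAdd m i + 1) = g (i + 1) := by
  obtain h | ⟨h, hi⟩ := natAdd_add_one_eq_or (m := m) i
  · rw [h, Fin.append_right]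
  · rw [h, hi, Fin.append_left, h₀]

theorem append_castAdd_add_one_add_one (h₀ : f 0 = g 0) (h₁ : f 1 = g 1) (i : Fin m) :
    Fin.append f g (Fin.castAdd n i + 1 + 1) = f (i + 1 + 1) := by
  obtain h | ⟨h, hi⟩ := castAdd_add_one_eq_or (n := n) i
  · rw [h, append_castAdd_add_one h₀]
  · rw [h, hi, append_natAdd_add_one h₀, zero_add, zero_add, h₁]

theorem append_natAdd_add_one_add_one (h₀ : f 0 = g 0) (h₁ : f 1 = g 1) (i : Fin n) :
    Fin.append f g (Fin.natAdd m i + 1 + 1) = g (i + 1 + 1) := by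
  obtain h | ⟨h, hi⟩ := natAdd_add_one_eq_or (m := m) i
  · rw [h, append_natAdd_add_one h₀]
  · rw [h, hi, append_castAdd_add_one h₀, zero_add, zero_add, h₁]

end CyclicWord

/-- There is a cyclic word of length `n` that starts with `a`, `b` and whose `n` cyclically
consecutive triples satisfy `R`. The start is prescribed so that words can be concatenated; the
length is positive because `Fin n` must have an element `0`. -/
def HasCyclicWord {α : Type*} (R : α → α → α → Prop) (a b : α) (n : ℕ) : Prop :=
  ∃ (_ : NeZero n) (f : Fin n → α), f 0 = a ∧ f 1 = b ∧ ∀ i, R (f i) (f (i + 1)) (f (i + 1 + 1))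

theorem HasCyclicWord.add {α : Type*} {R : α → α → α → Prop} {a b : α} {m n : ℕ}
    (hm : HasCyclicWord R a b m) (hn : HasCyclicWord R a b n) : HasCyclicWord R a b (m + n) := by
  obtain ⟨_, f, f_zero, f_one, hf⟩ := hm
  obtain ⟨_, g, g_zero, g_one, hg⟩ := hn
  have h₀ : f 0 = g 0 := f_zero.trans g_zero.symm
  have h₁ : f 1 = g 1 := f_one.trans g_one.symm
  have zero_eq : (0 : Fin (m + n)) = Fin.castAdd n 0 := by ext; simp
  refine ⟨inferInstance, Fin.append f g, ?_, ?_, fun i => ?_⟩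
  · rw [zero_eq, Fin.append_left, f_zero]
  · rw [← zero_add 1, zero_eq, append_castAdd_add_one h₀, zero_add, f_one]
  · cases i using Fin.addCases with
    | left i =>
      rw [Fin.append_left, append_castAdd_add_one h₀, append_castAdd_add_one_add_one h₀ h₁]
      exact hf i
    | right i =>
      rw [Fin.append_right, append_natAdd_add_one h₀, append_natAdd_add_one_add_one h₀ h₁]
      exact hg i

/-- The condition that a `2`-tone `k`-coloring of a cycle puts on the color sets of three
consecutive vertices. It constrains the size of `x` and the pair `x`, `y` only, since the
conditions on the others come from the next triples around the cycle. -/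
abbrev IsToneTriple (k : ℕ) (x y z : Finset ℕ) : Prop :=
  x ∈ powersetCard 2 (Icc 1 k) ∧ Disjoint x y ∧ x ≠ z

theorem HasCyclicWord.exists_isTToneColoring {k n : ℕ} {a b : Finset ℕ}
    (h : HasCyclicWord (IsToneTriple k) a b n) (hn : 2 ≤ n) :
    ∃ f, IsTToneColoring (cycleGraph n) 2 k f := by
  obtain ⟨_, f, -, -, hf⟩ := h
  refine ⟨f, isTToneColoring_two_of_adj (fun i => (hf i).1) (fun i j hij => ?_)
    fun i l j hil hlj hij => ?_⟩
  · obtain rfl | rfl := (cycleGraph_adj_iff_eq_add_one hn).1 hij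
    · exact (hf j).2.1.symm
    · exact (hf i).2.1
  · obtain rfl | rfl := (cycleGraph_adj_iff_eq_add_one hn).1 hil <;>
      obtain h | rfl := (cycleGraph_adj_iff_eq_add_one hn).1 hlj
    · exact h ▸ (hf j).2.2.symm
    · exact absurd rfl hij
    · exact absurd (add_right_cancel h) hij
    · exact (hf i).2.2

theorem hasCyclicWord_six {n : ℕ} (h : n = 3 ∨ n = 4 ∨ n = 7) :
    HasCyclicWord (IsToneTriple 6) {1, 2} {3, 4} n := by
  obtain rfl | rfl | rfl := h
  · exact ⟨inferInstance, ![{1, 2}, {3, 4}, {5, 6}], by decide⟩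
  · exact ⟨inferInstance, ![{1, 2}, {3, 4}, {1, 5}, {3, 6}], by decide⟩
  · exact ⟨inferInstance, ![{1, 2}, {3, 4}, {1, 5}, {2, 4}, {1, 6}, {3, 5}, {4, 6}], by decide⟩

theorem hasCyclicWord_five {n : ℕ} (h5 : 5 ≤ n) (h7 : n ≠ 7) :
    HasCyclicWord (IsToneTriple 5) {1, 2} {3, 4} n := by
  have five : HasCyclicWord (IsToneTriple 5) {1, 2} {3, 4} 5 :=
    ⟨inferInstance, ![{1, 2}, {3, 4}, {1, 5}, {2, 3}, {4, 5}], by decide⟩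
  have six : HasCyclicWord (IsToneTriple 5) {1, 2} {3, 4} 6 :=
    ⟨inferInstance, ![{1, 2}, {3, 4}, {1, 5}, {2, 4}, {1, 3}, {4, 5}], by decide⟩
  have eight : HasCyclicWord (IsToneTriple 5) {1, 2} {3, 4} 8 :=
    ⟨inferInstance, ![{1, 2}, {3, 4}, {1, 5}, {2, 3}, {1, 4}, {2, 5}, {1, 3}, {4, 5}], by decide⟩
  have nine : HasCyclicWord (IsToneTriple 5) {1, 2} {3, 4} 9 :=
    ⟨inferInstance, ![{1, 2}, {3, 4}, {1, 5}, {2, 3}, {1, 4}, {2, 5}, {1, 3}, {2, 4}, {3, 5}],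
      by decide⟩
  induction n using Nat.strong_induction_on with
  | _ n ih =>
    by_cases hbase : n = 5 ∨ n = 6 ∨ n = 8 ∨ n = 9 ∨ n = 12
    · obtain rfl | rfl | rfl | rfl | rfl := hbase
      exacts [five, six, eight, nine, six.add six]
    · obtain ⟨m, rfl⟩ : ∃ m, n = m + 5 := ⟨n - 5, by omega⟩
      exact (ih m (by omega) (by omega) (by omega)).add five

section Independent

variable {A : Type*} [AddGroup A] [Fintype A] {S : Finset A} {g : A}

theorem two_mul_card_le_of_add_notMem (hS : ∀ i ∈ S, i + g ∉ S) :
    2 * #S ≤ Fintype.card A := by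
  classical
  have hdisj : Disjoint S (S.map (addRightEmbedding g)) := by
    simpa [disjoint_right] using hS
  calc 2 * #S = #(S ∪ S.map (addRightEmbedding g)) := by
        rw [card_union_of_disjoint hdisj, card_map, two_mul]
    _ ≤ Fintype.card A := card_le_univ _

theorem three_mul_card_le_of_add_notMem [DecidableEq A] (hS : ∀ i ∈ S, i + g ∉ S) :
    3 * #S ≤ Fintype.card A + #{i ∈ S | i + g + g ∈ S} := by
  let S₁ := S.map (addRightEmbedding g)
  let S₂ := {i ∈ S | i + g + g ∉ S}.map (addRightEmbedding (g + g))
  have hdisj₁ : Disjoint S S₁ := by simpa [S₁, disjoint_right] using hS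
  have hdisj₂ : Disjoint (S ∪ S₁) S₂ := by
    rw [disjoint_right]
    simp only [S₁, S₂, mem_map, mem_filter, mem_union, addRightEmbedding_apply]
    rintro _ ⟨i, ⟨hi, hi₂⟩, rfl⟩ (hmem | ⟨j, hj, hji⟩)
    · exact hi₂ (add_assoc i g g ▸ hmem)
    · rw [← add_assoc] at hji
      exact hS i hi (add_right_cancel hji ▸ hj)
  have hcard : #S + #S + #{i ∈ S | i + g + g ∉ S} ≤ Fintype.card A := by
    calc _ = #(S ∪ S₁ ∪ S₂) := by
          rw [card_union_of_disjoint hdisj₂, card_union_of_disjoint hdisj₁, card_map, card_map]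
      _ ≤ Fintype.card A := card_le_univ _
  have hsplit := card_filter_add_card_filter_not (s := S) (fun i => i + g + g ∈ S)
  omega

end Independent

theorem sum_card_filter_mem_eq_sum_card {ι β : Type*} [Fintype ι] [DecidableEq β]
    {B : ι → Finset β} {T : Finset β} (hB : ∀ i, B i ⊆ T) :
    ∑ c ∈ T, #{i | c ∈ B i} = ∑ i, #(B i) := by
  calc ∑ c ∈ T, #{i | c ∈ B i} = ∑ i, #{c ∈ T | c ∈ B i} :=
        sum_card_bipartiteAbove_eq_sum_card_bipartiteBelow fun c i => c ∈ B i
    _ = ∑ i, #(B i) := by simp [filter_mem_eq_inter, inter_eq_right.2 (hB _)]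

namespace IsTToneColoring

variable {n t k : ℕ} [NeZero n] {f : Fin n → Finset ℕ}

theorem sum_card_filter_mem_mem_le (hf : IsTToneColoring (cycleGraph n) t k f) (hn : 3 ≤ n) :
    ∑ c ∈ Icc 1 k, #{i | c ∈ f i ∧ c ∈ f (i + 1 + 1)} ≤ n := by
  calc ∑ c ∈ Icc 1 k, #{i | c ∈ f i ∧ c ∈ f (i + 1 + 1)}
      = ∑ i, #(f i ∩ f (i + 1 + 1)) := by
        simp only [← mem_inter]
        exact sum_card_filter_mem_eq_sum_card fun i => inter_subset_left.trans (hf.1 i).1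
    _ ≤ ∑ _i : Fin n, 1 := sum_le_sum fun i _ =>
        hf.card_inter_le_one (cycleGraph_adj_add_one (by omega) i)
          (cycleGraph_adj_add_one (by omega) (i + 1)) (fin_ne_add_one_add_one hn i)
    _ = n := by simp

theorem mul_le_of_forall_add_one_notMem (hf : IsTToneColoring (cycleGraph n) t k f) (hn : 3 ≤ n)
    {a b c : ℕ} (hS : ∀ S : Finset (Fin n), (∀ i ∈ S, i + 1 ∉ S) →
      a * #S ≤ b + c * #{i ∈ S | i + 1 + 1 ∈ S}) :
    a * (t * n) ≤ b * k + c * n := by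
  have hclass (x : ℕ) : a * #{i | x ∈ f i} ≤ b + c * #{i | x ∈ f i ∧ x ∈ f (i + 1 + 1)} := by
    have hindep (i : Fin n) : x ∈ f i → x ∉ f (i + 1) := fun hi => disjoint_left.1
      (hf.disjoint_of_adj (cycleGraph_adj_add_one (by omega) i)) hi
    simpa [filter_filter] using hS {i | x ∈ f i} (by simpa using hindep)
  calc a * (t * n) = a * ∑ x ∈ Icc 1 k, #{i | x ∈ f i} := by
        simp [sum_card_filter_mem_eq_sum_card fun i => (hf.1 i).1, (hf.1 _).2, mul_comm]
    _ ≤ ∑ x ∈ Icc 1 k, (b + c * #{i | x ∈ f i ∧ x ∈ f (i + 1 + 1)}) := by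
        rw [mul_sum]
        exact sum_le_sum fun x _ => hclass x
    _ = b * k + c * ∑ x ∈ Icc 1 k, #{i | x ∈ f i ∧ x ∈ f (i + 1 + 1)} := by
        simp [sum_add_distrib, mul_sum, mul_comm]
    _ ≤ b * k + c * n := by gcongr; exact hf.sum_card_filter_mem_mem_le hn

end IsTToneColoring

theorem IsTToneColoring.five_le_of_cycleGraph {n k : ℕ} {f : Fin n → Finset ℕ}
    (hf : IsTToneColoring (cycleGraph n) 2 k f) (hn : 3 ≤ n) : 5 ≤ k := by
  have : NeZero n := ⟨by omega⟩
  have := hf.three_mul_le_add_one (cycleGraph_adj_add_one (by omega) 0)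
    (cycleGraph_adj_add_one (by omega) _) (fin_ne_add_one_add_one hn 0)
  omega

theorem IsTToneColoring.six_le_of_cycleGraph {n k : ℕ} {f : Fin n → Finset ℕ}
    (hf : IsTToneColoring (cycleGraph n) 2 k f) (hn : n = 3 ∨ n = 4 ∨ n = 7) : 6 ≤ k := by
  -- Double counting with the weights of `three_mul_card_le_of_add_notMem` is tight for `k = 5`; for
  -- `n = 4` and `n = 7` it is the integrality of `#S` that gives a better inequality.
  obtain rfl | rfl | rfl := hn
  · have hindep (S : Finset (Fin 3)) (hS : ∀ i ∈ S, i + 1 ∉ S) :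
        1 * #S ≤ 1 + 0 * #{i ∈ S | i + 1 + 1 ∈ S} := by
      have htwo : 2 * #S ≤ 3 := two_mul_card_le_of_add_notMem hS
      omega
    have hcount := hf.mul_le_of_forall_add_one_notMem (by omega) hindep
    omega
  · have hindep (S : Finset (Fin 4)) (hS : ∀ i ∈ S, i + 1 ∉ S) :
        2 * #S ≤ 2 + 1 * #{i ∈ S | i + 1 + 1 ∈ S} := by
      have hthree : 3 * #S ≤ 4 + _ := three_mul_card_le_of_add_notMem hS
      omega
    have hcount := hf.mul_le_of_forall_add_one_notMem (by omega) hindep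
    omega
  · have hindep (S : Finset (Fin 7)) (hS : ∀ i ∈ S, i + 1 ∉ S) :
        2 * #S ≤ 4 + 1 * #{i ∈ S | i + 1 + 1 ∈ S} := by
      have hthree : 3 * #S ≤ 7 + _ := three_mul_card_le_of_add_notMem hS
      omega
    have hcount := hf.mul_le_of_forall_add_one_notMem (by omega) hindep
    omega

/-- For `n ≥ 3`, `τ₂(C_n) = 6` if `n ∈ {3,4,7}` and `τ₂(C_n) = 5` otherwise. -/
theorem stmt3 (n : ℕ) (hn : 3 ≤ n) :
    toneNumber (SimpleGraph.cycleGraph n) 2 =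
      if n = 3 ∨ n = 4 ∨ n = 7 then 6 else 5 := by
  split_ifs with h
  · exact toneNumber_eq ((hasCyclicWord_six h).exists_isTToneColoring (by omega))
      fun k f hf => hf.six_le_of_cycleGraph h
  · exact toneNumber_eq ((hasCyclicWord_five (by omega) (by omega)).exists_isTToneColoring
      (by omega)) fun k f hf => hf.five_le_of_cycleGraph hn
end

section
/- For every n ≥ 3, the cycle C_n admits a good 2-tone 6-coloring. -/
/-- A good 2-tone `k`-coloring: a 2-tone `k`-coloring in which any two vertices
at distance exactly two share exactly one common color. -/
def IsGood2ToneColoring {V : Type*} (G : SimpleGraph V) (k : ℕ) (f : V → Finset ℕ) : Prop :=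
  IsTToneColoring G 2 k f ∧ ∀ u v : V, G.dist u v = 2 → ((f u) ∩ (f v)).card = 1

/-!
Read a coloring around the cycle as a cyclic word of color pairs in which consecutive pairs are
disjoint and pairs two steps apart share exactly one color. Being good is a condition on windows of
three consecutive letters, so two such words that begin with the same two letters can be
concatenated. Words of lengths `4`, `5`, `6`, `7` beginning with `{1, 2}`, `{4, 5}` thus yield one
for every length `n ≥ 4`. There is no such word of length `3`, where `i + 2` is also adjacent to
`i`, and `C_3` is colored as a complete graph instead.
-/

theorem isGood2ToneColoring_of_adj_of_dist_eq_two
    {V : Type*} {G : SimpleGraph V} {k : ℕ} {f : V → Finset ℕ}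
    (subset_Icc : ∀ v, f v ⊆ Finset.Icc 1 k) (card_eq_two : ∀ v, (f v).card = 2)
    (disjoint_of_adj : ∀ u v, G.Adj u v → Disjoint (f u) (f v))
    (card_inter_of_dist : ∀ u v, G.dist u v = 2 → (f u ∩ f v).card = 1) :
    IsGood2ToneColoring G k f := by
  refine ⟨⟨fun v => ⟨subset_Icc v, card_eq_two v⟩, fun u v hne hreach => ?_⟩, card_inter_of_dist⟩
  have dist_pos : 0 < G.dist u v := hreach.pos_dist_of_ne hne
  have card_le_two : (f u ∩ f v).card ≤ 2 :=
    (Finset.card_le_card Finset.inter_subset_left).trans (card_eq_two u).le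
  obtain dist_one | dist_two | two_lt_dist :
      G.dist u v = 1 ∨ G.dist u v = 2 ∨ 2 < G.dist u v := by omega
  · have hdisj := disjoint_of_adj u v (SimpleGraph.dist_eq_one_iff_adj.mp dist_one)
    rwa [Finset.disjoint_iff_inter_eq_empty.mp hdisj, Finset.card_empty]
  · rw [card_inter_of_dist u v dist_two, dist_two]
    exact one_lt_two
  · exact card_le_two.trans_lt two_lt_dist

theorem isGood2ToneColoring_top (n : ℕ) :
    IsGood2ToneColoring (⊤ : SimpleGraph (Fin n)) (2 * n)
      (fun v => {2 * v.val + 1, 2 * v.val + 2}) := by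
  refine isGood2ToneColoring_of_adj_of_dist_eq_two (fun v => ?_) (fun v => ?_)
    (fun u v hadj => ?_) (fun u v hdist => ?_)
  · intro c hc
    simp only [Finset.mem_insert, Finset.mem_singleton, Finset.mem_Icc] at hc ⊢
    omega
  · exact Finset.card_pair (by omega)
  · have val_ne : u.val ≠ v.val := Fin.val_ne_of_ne hadj.ne
    rw [Finset.disjoint_left]
    intro c hcu hcv
    simp only [Finset.mem_insert, Finset.mem_singleton] at hcu hcv
    omega
  · rw [SimpleGraph.dist_top] at hdist
    split_ifs at hdist
    contradiction

theorem dist_eq_two_iff {V : Type*} {G : SimpleGraph V} {u v : V} :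
    G.dist u v = 2 ↔ u ≠ v ∧ ¬ G.Adj u v ∧ (G.commonNeighbors u v).Nonempty := by
  rw [← SimpleGraph.edist_eq_two_iff, SimpleGraph.dist, ENat.toNat_eq_iff two_ne_zero,
    Nat.cast_ofNat]

theorem cycleGraph_eq_add_one_of_adj {n : ℕ} {u v : Fin (n + 2)}
    (hadj : (SimpleGraph.cycleGraph (n + 2)).Adj u v) : v = u + 1 ∨ u = v + 1 := by
  rw [SimpleGraph.cycleGraph_adj, sub_eq_iff_eq_add', sub_eq_iff_eq_add'] at hadj
  exact hadj.symm

theorem cycleGraph_eq_add_two_of_dist_eq_two {n : ℕ} {u v : Fin (n + 2)}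
    (hdist : (SimpleGraph.cycleGraph (n + 2)).dist u v = 2) : v = u + 1 + 1 ∨ u = v + 1 + 1 := by
  obtain ⟨hne, -, w, huw, hvw⟩ := dist_eq_two_iff.mp hdist
  obtain rfl | rfl := cycleGraph_eq_add_one_of_adj huw <;>
    obtain hw | rfl := cycleGraph_eq_add_one_of_adj hvw
  · exact absurd (add_right_cancel hw) hne
  · exact Or.inl rfl
  · exact Or.inr (by rw [hw])
  · exact absurd rfl hne

/-- A cyclic word of length `n` whose letters are pairs of colors from `{1, …, k}`, such that
reading it off around `C_n` gives a good 2-tone coloring. The word is encoded as a sequence that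
returns to its first two letters `a`, `b` at positions `n`, `n + 1`; values from position `n + 2`
on are irrelevant. -/
structure IsGoodCyclicWord (k : ℕ) (a b : Finset ℕ) (n : ℕ) (w : ℕ → Finset ℕ) : Prop where
  apply_zero : w 0 = a
  apply_one : w 1 = b
  apply_length : w n = a
  apply_length_add_one : w (n + 1) = b
  subset_Icc : ∀ i < n, w i ⊆ Finset.Icc 1 k
  card_eq_two : ∀ i < n, (w i).card = 2
  disjoint_add_one : ∀ i < n, Disjoint (w i) (w (i + 1))
  card_inter_add_two : ∀ i < n, (w i ∩ w (i + 2)).card = 1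

theorem forall_lt_add {P : ℕ → Prop} {m n : ℕ} (hleft : ∀ i < m, P i)
    (hright : ∀ i < n, P (m + i)) (i : ℕ) (hi : i < m + n) : P i := by
  obtain hlt | ⟨j, rfl⟩ := (lt_or_ge i m).imp_right Nat.exists_eq_add_of_le
  · exact hleft i hlt
  · exact hright j (Nat.add_lt_add_iff_left.mp hi)

/-- The concatenation of the first `m` letters of `w` with `w'`. -/
def wordAppend {α : Type*} (m : ℕ) (w w' : ℕ → α) (i : ℕ) : α :=
  if i < m then w i else w' (i - m)

theorem wordAppend_apply_add {α : Type*} (m : ℕ) (w w' : ℕ → α) (i : ℕ) :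
    wordAppend m w w' (m + i) = w' i := by
  simp [wordAppend]

theorem wordAppend_apply_of_lt_add_two {α : Type*} {m : ℕ} {w w' : ℕ → α} (hzero : w m = w' 0)
    (hone : w (m + 1) = w' 1) {i : ℕ} (hi : i < m + 2) : wordAppend m w w' i = w i := by
  obtain hlt | rfl | rfl : i < m ∨ i = m ∨ i = m + 1 := by omega
  · exact if_pos hlt
  · exact (wordAppend_apply_add i w w' 0).trans hzero.symm
  · exact (wordAppend_apply_add m w w' 1).trans hone.symm

namespace IsGoodCyclicWord

variable {k m n : ℕ} {a b : Finset ℕ} {w w' : ℕ → Finset ℕ}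

theorem append (hw : IsGoodCyclicWord k a b m w) (hw' : IsGoodCyclicWord k a b n w') :
    IsGoodCyclicWord k a b (m + n) (wordAppend m w w') := by
  -- Both words begin with `a`, `b`, so the concatenation follows `w` even at `m` and `m + 1`.
  have left {i : ℕ} (hi : i < m + 2) : wordAppend m w w' i = w i :=
    wordAppend_apply_of_lt_add_two (hw.apply_length.trans hw'.apply_zero.symm)
      (hw.apply_length_add_one.trans hw'.apply_one.symm) hi
  have right (i : ℕ) : wordAppend m w w' (m + i) = w' i := wordAppend_apply_add m w w' i
  constructor
  case apply_zero => rw [left (by omega), hw.apply_zero]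
  case apply_one => rw [left (by omega), hw.apply_one]
  case apply_length => rw [right, hw'.apply_length]
  case apply_length_add_one => rw [add_assoc, right, hw'.apply_length_add_one]
  case subset_Icc =>
    refine forall_lt_add (fun i hi => ?_) (fun i hi => ?_)
    · simpa only [left (Nat.lt_add_right 2 hi)] using hw.subset_Icc i hi
    · simpa only [right] using hw'.subset_Icc i hi
  case card_eq_two =>
    refine forall_lt_add (fun i hi => ?_) (fun i hi => ?_)
    · simpa only [left (Nat.lt_add_right 2 hi)] using hw.card_eq_two i hi
    · simpa only [right] using hw'.card_eq_two i hi
  case disjoint_add_one =>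
    refine forall_lt_add (fun i hi => ?_) (fun i hi => ?_)
    · rw [left (by omega), left (by omega : i + 1 < m + 2)]
      exact hw.disjoint_add_one i hi
    · simpa only [add_assoc, right] using hw'.disjoint_add_one i hi
  case card_inter_add_two =>
    refine forall_lt_add (fun i hi => ?_) (fun i hi => ?_)
    · rw [left (by omega), left (by omega : i + 2 < m + 2)]
      exact hw.card_inter_add_two i hi
    · simpa only [add_assoc, right] using hw'.card_inter_add_two i hi

theorem apply_mod (hw : IsGoodCyclicWord k a b (n + 2) w) {i : ℕ} (hi : i < n + 4) :
    w (i % (n + 2)) = w i := by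
  obtain hlt | rfl | rfl : i < n + 2 ∨ i = n + 2 ∨ i = n + 2 + 1 := by omega
  · rw [Nat.mod_eq_of_lt hlt]
  · rw [Nat.mod_self, hw.apply_zero, hw.apply_length]
  · rw [Nat.add_mod_left, Nat.mod_eq_of_lt (by omega), hw.apply_one, hw.apply_length_add_one]

theorem apply_val_add_one (hw : IsGoodCyclicWord k a b (n + 2) w) (v : Fin (n + 2)) :
    w (v + 1).val = w (v.val + 1) := by
  rw [Fin.val_add, Fin.val_one, hw.apply_mod (by omega)]

theorem apply_val_add_two (hw : IsGoodCyclicWord k a b (n + 2) w) (v : Fin (n + 2)) :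
    w (v + 1 + 1).val = w (v.val + 2) := by
  rw [Fin.val_add, Fin.val_add, Fin.val_one, Nat.mod_add_mod, hw.apply_mod (by omega)]

theorem isGood2ToneColoring_cycleGraph (hw : IsGoodCyclicWord k a b (n + 2) w) :
    IsGood2ToneColoring (SimpleGraph.cycleGraph (n + 2)) k (fun v => w v.val) := by
  have disjoint_succ (v : Fin (n + 2)) : Disjoint (w v.val) (w (v + 1).val) := by
    rw [hw.apply_val_add_one]
    exact hw.disjoint_add_one v v.isLt
  have card_inter_succ_succ (v : Fin (n + 2)) : (w v.val ∩ w (v + 1 + 1).val).card = 1 := by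
    rw [hw.apply_val_add_two]
    exact hw.card_inter_add_two v v.isLt
  refine isGood2ToneColoring_of_adj_of_dist_eq_two (fun v => hw.subset_Icc v v.isLt)
    (fun v => hw.card_eq_two v v.isLt) (fun u v hadj => ?_) (fun u v hdist => ?_)
  · obtain rfl | rfl := cycleGraph_eq_add_one_of_adj hadj
    · exact disjoint_succ u
    · exact (disjoint_succ v).symm
  · obtain rfl | rfl := cycleGraph_eq_add_two_of_dist_eq_two hdist
    · exact card_inter_succ_succ u
    · rw [Finset.inter_comm]
      exact card_inter_succ_succ v

end IsGoodCyclicWord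

theorem isGoodCyclicWord_four : IsGoodCyclicWord 6 {1, 2} {4, 5} 4
    (fun i => [{1, 2}, {4, 5}, {1, 3}, {4, 6}].getD (i % 4) ∅) := by
  constructor <;> decide

theorem isGoodCyclicWord_five : IsGoodCyclicWord 6 {1, 2} {4, 5} 5
    (fun i => [{1, 2}, {4, 5}, {1, 3}, {2, 4}, {3, 5}].getD (i % 5) ∅) := by
  constructor <;> decide

theorem isGoodCyclicWord_six : IsGoodCyclicWord 6 {1, 2} {4, 5} 6
    (fun i => [{1, 2}, {4, 5}, {1, 3}, {2, 4}, {1, 5}, {3, 4}].getD (i % 6) ∅) := by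
  constructor <;> decide

theorem isGoodCyclicWord_seven : IsGoodCyclicWord 6 {1, 2} {4, 5} 7
    (fun i => [{1, 2}, {4, 5}, {1, 3}, {2, 4}, {1, 5}, {2, 3}, {5, 6}].getD (i % 7) ∅) := by
  constructor <;> decide

theorem exists_isGoodCyclicWord {n : ℕ} (hn : 4 ≤ n) :
    ∃ w, IsGoodCyclicWord 6 {1, 2} {4, 5} n w := by
  induction n using Nat.strong_induction_on with
  | h n ih =>
    obtain rfl | rfl | rfl | rfl | h8 : n = 4 ∨ n = 5 ∨ n = 6 ∨ n = 7 ∨ 8 ≤ n := by omega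
    · exact ⟨_, isGoodCyclicWord_four⟩
    · exact ⟨_, isGoodCyclicWord_five⟩
    · exact ⟨_, isGoodCyclicWord_six⟩
    · exact ⟨_, isGoodCyclicWord_seven⟩
    · obtain ⟨m, rfl⟩ := Nat.exists_eq_add_of_le' hn
      obtain ⟨w, hw⟩ := ih m (by omega) (by omega)
      exact ⟨_, hw.append isGoodCyclicWord_four⟩

/-- For every `n ≥ 3`, the cycle `C_n` admits a good 2-tone 6-coloring. -/
theorem stmt5 (n : ℕ) (hn : 3 ≤ n) :
    ∃ f : Fin n → Finset ℕ, IsGood2ToneColoring (SimpleGraph.cycleGraph n) 6 f := by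
  obtain rfl | four_le := hn.eq_or_lt'
  · rw [SimpleGraph.cycleGraph_three_eq_top]
    exact ⟨_, isGood2ToneColoring_top 3⟩
  · obtain ⟨w, hw⟩ := exists_isGoodCyclicWord four_le
    obtain ⟨m, rfl⟩ := Nat.exists_eq_add_of_le' (Nat.le_of_succ_le hn)
    exact ⟨_, hw.isGood2ToneColoring_cycleGraph⟩
end

section
/- For every finite simple graph G and every positive integer k ≥ 3, any 3-good k-coloring of G is a 3-tone k-coloring of G. -/
/-- A 3-good `k`-coloring: each vertex gets a set of three colors from `{1,…,k}`,
adjacent vertices share no colors, and vertices at distance exactly two share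
exactly one color. -/
def Is3GoodColoring {V : Type*} (G : SimpleGraph V) (k : ℕ) (f : V → Finset ℕ) : Prop :=
  (∀ v, f v ⊆ Finset.Icc 1 k ∧ (f v).card = 3) ∧
  (∀ u v : V, G.Adj u v → (f u) ∩ (f v) = ∅) ∧
  (∀ u v : V, G.dist u v = 2 → ((f u) ∩ (f v)).card = 1)

/-!
Two sets of three colors share at most three, so only distances one, two and three matter, and
the first two are immediate. If `u` and `v` are at distance three, let `w` be the neighbor of `u`
on a shortest path to `v`: the color set of `w` meets that of `v` but not that of `u`, so `u` and
`v` have different color sets and share at most two colors.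
-/

theorem exists_adj_dist_eq_of_dist_eq_succ {V : Type*} {G : SimpleGraph V} {u v : V} {n : ℕ}
    (huv : G.dist u v = n + 1) : ∃ w, G.Adj u w ∧ G.dist w v = n := by
  obtain ⟨p, hp⟩ := G.exists_walk_of_dist_ne_zero (huv.trans_ne n.succ_ne_zero)
  cases p with
  | nil => simp at huv
  | @cons _ w _ huw q =>
    rw [SimpleGraph.Walk.length_cons, huv] at hp
    have dist_le_length : G.dist w v ≤ q.length := SimpleGraph.dist_le q
    have triangle : G.dist u v ≤ G.dist u w + G.dist w v := huw.reachable.dist_triangle_left v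
    rw [SimpleGraph.dist_eq_one_iff_adj.mpr huw] at triangle
    exact ⟨w, huw, by omega⟩

theorem ne_of_dist_eq_succ {V α : Type*} [PartialOrder α] [OrderBot α] {G : SimpleGraph V}
    {f : V → α} {n : ℕ} (disjoint_of_adj : ∀ u v, G.Adj u v → Disjoint (f u) (f v))
    (not_disjoint_of_dist : ∀ u v, G.dist u v = n → ¬ Disjoint (f u) (f v))
    {u v : V} (huv : G.dist u v = n + 1) : f u ≠ f v := by
  obtain ⟨w, huw, hwv⟩ := exists_adj_dist_eq_of_dist_eq_succ huv
  intro heq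
  exact not_disjoint_of_dist w v hwv (heq ▸ (disjoint_of_adj u w huw).symm)

theorem card_inter_lt_card_left_of_ne {α : Type*} [DecidableEq α] {s t : Finset α}
    (hcard : t.card ≤ s.card) (hne : s ≠ t) : (s ∩ t).card < s.card := by
  have not_subset : ¬ s ⊆ t := fun hst => hne (Finset.eq_of_subset_of_card_le hst hcard)
  exact Finset.card_lt_card (inf_lt_left.mpr not_subset)

namespace Is3GoodColoring

variable {V : Type*} {G : SimpleGraph V} {k : ℕ} {f : V → Finset ℕ} {u v : V}

theorem ne_of_dist_eq_three (hf : Is3GoodColoring G k f) (huv : G.dist u v = 3) : f u ≠ f v := by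
  obtain ⟨-, inter_eq_empty, card_inter_eq_one⟩ := hf
  refine ne_of_dist_eq_succ (n := 2)
    (fun x y hxy => Finset.disjoint_iff_inter_eq_empty.mpr (inter_eq_empty x y hxy))
    (fun x y hxy => ?_) huv
  rw [Finset.not_disjoint_iff_nonempty_inter, ← Finset.card_pos, card_inter_eq_one x y hxy]
  exact one_pos

theorem card_inter_lt_dist (hf : Is3GoodColoring G k f) (hne : u ≠ v) (hr : G.Reachable u v) :
    (f u ∩ f v).card < G.dist u v := by
  have card_eq (x : V) : (f x).card = 3 := (hf.1 x).2
  have card_inter_le : (f u ∩ f v).card ≤ 3 :=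
    (Finset.card_le_card Finset.inter_subset_left).trans_eq (card_eq u)
  have dist_pos : 0 < G.dist u v := hr.pos_dist_of_ne hne
  obtain hd | hd | hd | hd :
      G.dist u v = 1 ∨ G.dist u v = 2 ∨ G.dist u v = 3 ∨ 3 < G.dist u v := by omega
  · simp [hd, hf.2.1 u v (SimpleGraph.dist_eq_one_iff_adj.mp hd)]
  · simp [hd, hf.2.2 u v hd]
  · rw [hd, ← card_eq u]
    exact card_inter_lt_card_left_of_ne (by rw [card_eq, card_eq]) (hf.ne_of_dist_eq_three hd)
  · exact card_inter_le.trans_lt hd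

end Is3GoodColoring

theorem stmt6_general {V : Type*} (G : SimpleGraph V) (k : ℕ) (f : V → Finset ℕ)
    (hf : Is3GoodColoring G k f) : IsTToneColoring G 3 k f :=
  ⟨hf.1, fun _ _ hne hr => hf.card_inter_lt_dist hne hr⟩

/-- Any 3-good `k`-coloring of a finite simple graph is a 3-tone `k`-coloring. -/
theorem stmt6 {V : Type*} [Fintype V] (G : SimpleGraph V) (k : ℕ) (hk : 3 ≤ k)
    (f : V → Finset ℕ) (hf : Is3GoodColoring G k f) :
    IsTToneColoring G 3 k f :=
  stmt6_general G k f hf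
end

section
/- For every n ≥ 3, the cycle C_n admits a 3-good 11-coloring. -/
/-!
Going once around `C_n`, a 3-good coloring is a cyclic word of color sets constrained only on
windows of three consecutive letters. Hence two such words with the same first two letters can be
concatenated, and it suffices to exhibit words of lengths 4, 5, 6 and 7 starting with
`{1, 2, 3}, {4, 5, 6}`: prefixing the word of length 4 reaches every larger length. These words use
ten colors, the number `C_5` forces: each of its five non-adjacent pairs shares one color and no
color occurs three times, which leaves `15 - 5` distinct ones. The graphs `C_n` with `n ≤ 3` are
complete and have no vertices at distance two.
-/

/-- A closed walk of `n` steps on the ordered pairs of elements of `α`, given by its sequence of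
letters: it starts and ends at the pair `(a, b)`, and every three consecutive letters satisfy `P`.
Only the values of `g` up to `n + 1` matter. -/
structure IsClosedChain {α : Type*} (P : α → α → α → Prop) (a b : α) (n : ℕ) (g : ℕ → α) :
    Prop where
  zero : g 0 = a
  one : g 1 = b
  length : g n = a
  length_succ : g (n + 1) = b
  window : ∀ i < n, P (g i) (g (i + 1)) (g (i + 2))

namespace IsClosedChain

variable {α : Type*} {P : α → α → α → Prop} {a b : α} {m n : ℕ} {g h : ℕ → α}

theorem append (hg : IsClosedChain P a b m g) (hh : IsClosedChain P a b n h) :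
    IsClosedChain P a b (m + n) fun i ↦ if i < m then g i else h (i - m) := by
  set s : ℕ → α := fun i ↦ if i < m then g i else h (i - m)
  have s_left (i : ℕ) (hi : i ≤ m + 1) : s i = g i := by
    obtain hi | rfl | rfl : i < m ∨ i = m ∨ i = m + 1 := by omega
    · simp [s, hi]
    · simp [s, hh.zero, hg.length]
    · simp [s, hh.one, hg.length_succ]
  have s_right (i : ℕ) : s (m + i) = h i := by simp [s]
  refine ⟨?_, ?_, ?_, ?_, fun i hi ↦ ?_⟩
  · rw [s_left 0 (by omega), hg.zero]
  · rw [s_left 1 (by omega), hg.one]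
  · rw [s_right, hh.length]
  · rw [add_assoc, s_right, hh.length_succ]
  · obtain him | ⟨j, rfl⟩ := (lt_or_ge i m).imp_right Nat.exists_eq_add_of_le
    · rw [s_left i (by omega), s_left (i + 1) (by omega), s_left (i + 2) (by omega)]
      exact hg.window i him
    · rw [add_assoc, add_assoc, s_right, s_right, s_right]
      exact hh.window j (by omega)

theorem apply_mod (hg : IsClosedChain P a b (n + 2) g) {i : ℕ} (hi : i ≤ n + 3) :
    g (i % (n + 2)) = g i := by
  obtain hi | rfl | rfl : i < n + 2 ∨ i = n + 2 ∨ i = n + 3 := by omega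
  · rw [Nat.mod_eq_of_lt hi]
  · rw [Nat.mod_self, hg.zero, hg.length]
  · rw [Nat.add_mod_left (n + 2) 1, Nat.mod_eq_of_lt (by omega), hg.one, hg.length_succ]

theorem window_fin (hg : IsClosedChain P a b (n + 2) g) (i : Fin (n + 2)) :
    P (g i) (g ↑(i + 1)) (g ↑(i + 1 + 1)) := by
  have apply_add_one : g ↑(i + 1) = g (i + 1) := by
    rw [Fin.val_add, Fin.val_one, hg.apply_mod (by omega)]
  have apply_add_two : g ↑(i + 1 + 1) = g (i + 2) := by
    rw [Fin.val_add, Fin.val_add, Fin.val_one, Nat.mod_add_mod, hg.apply_mod (by omega)]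
  rw [apply_add_one, apply_add_two]
  exact hg.window i i.isLt

theorem exists_of_four_le (h₄ : ∃ g, IsClosedChain P a b 4 g) (h₅ : ∃ g, IsClosedChain P a b 5 g)
    (h₆ : ∃ g, IsClosedChain P a b 6 g) (h₇ : ∃ g, IsClosedChain P a b 7 g) :
    ∀ n, 4 ≤ n → ∃ g, IsClosedChain P a b n g
  | 4, _ => h₄
  | 5, _ => h₅
  | 6, _ => h₆
  | 7, _ => h₇
  | n + 8, _ => by
    obtain ⟨g, hg⟩ := h₄
    obtain ⟨h, hh⟩ := exists_of_four_le ⟨g, hg⟩ h₅ h₆ h₇ (n + 4) (by omega)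
    rw [show n + 8 = 4 + (n + 4) by omega]
    exact ⟨_, hg.append hh⟩

end IsClosedChain

/-- The constraints that a 3-good `k`-coloring puts on the color sets `A`, `B`, `C` of three
consecutive vertices of a cycle. The conditions on `B` and `C` alone are left to the windows that
start at `B` and at `C`. -/
def IsGoodWindow (k : ℕ) (A B C : Finset ℕ) : Prop :=
  (A ⊆ Finset.Icc 1 k ∧ A.card = 3) ∧ A ∩ B = ∅ ∧ (A ∩ C).card = 1

instance (k : ℕ) (A B C : Finset ℕ) : Decidable (IsGoodWindow k A B C) :=
  inferInstanceAs (Decidable (_ ∧ _ ∧ _))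

/-- The infinite repetition of a finite word of color sets. -/
def repeatWord (w : List (Finset ℕ)) (i : ℕ) : Finset ℕ :=
  w.getD (i % w.length) ∅

theorem isClosedChain_four : IsClosedChain (IsGoodWindow 10) {1, 2, 3} {4, 5, 6} 4
    (repeatWord [{1, 2, 3}, {4, 5, 6}, {1, 7, 8}, {4, 9, 10}]) :=
  ⟨rfl, rfl, rfl, rfl, by decide⟩

theorem isClosedChain_five : IsClosedChain (IsGoodWindow 10) {1, 2, 3} {4, 5, 6} 5
    (repeatWord [{1, 2, 3}, {4, 5, 6}, {1, 7, 8}, {2, 4, 9}, {5, 7, 10}]) :=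
  ⟨rfl, rfl, rfl, rfl, by decide⟩

theorem isClosedChain_six : IsClosedChain (IsGoodWindow 10) {1, 2, 3} {4, 5, 6} 6
    (repeatWord [{1, 2, 3}, {4, 5, 6}, {1, 7, 8}, {2, 3, 4}, {1, 5, 6}, {4, 7, 8}]) :=
  ⟨rfl, rfl, rfl, rfl, by decide⟩

theorem isClosedChain_seven : IsClosedChain (IsGoodWindow 10) {1, 2, 3} {4, 5, 6} 7
    (repeatWord [{1, 2, 3}, {4, 5, 6}, {1, 7, 8}, {2, 3, 4}, {1, 5, 6}, {2, 7, 8}, {5, 9, 10}]) :=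
  ⟨rfl, rfl, rfl, rfl, by decide⟩

theorem cycleGraph_adj_iff_eq_add_one_s7 {n : ℕ} {u v : Fin (n + 2)} :
    (SimpleGraph.cycleGraph (n + 2)).Adj u v ↔ u = v + 1 ∨ v = u + 1 := by
  rw [SimpleGraph.cycleGraph_adj, sub_eq_iff_eq_add', sub_eq_iff_eq_add']

theorem ne_and_exists_adj_adj_of_dist_eq_two {V : Type*} {G : SimpleGraph V} {u v : V}
    (h : G.dist u v = 2) : u ≠ v ∧ ∃ w, G.Adj u w ∧ G.Adj w v := by
  have reachable : G.Reachable u v := .of_dist_ne_zero (by omega)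
  have edist_eq : G.edist u v = 2 := by rw [← reachable.coe_dist_eq_edist, h, Nat.cast_ofNat]
  obtain ⟨hne, -, w, huw, hvw⟩ := SimpleGraph.edist_eq_two_iff.mp edist_eq
  exact ⟨hne, w, huw, hvw.symm⟩

theorem eq_add_one_add_one_of_cycleGraph_dist_eq_two {n : ℕ} {u v : Fin (n + 2)}
    (h : (SimpleGraph.cycleGraph (n + 2)).dist u v = 2) : u = v + 1 + 1 ∨ v = u + 1 + 1 := by
  obtain ⟨hne, w, huw, hwv⟩ := ne_and_exists_adj_adj_of_dist_eq_two h
  rw [cycleGraph_adj_iff_eq_add_one_s7] at huw hwv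
  rcases huw with rfl | rfl <;> rcases hwv with hw | rfl
  · exact .inl (by rw [hw])
  · exact absurd rfl hne
  · exact absurd (add_right_cancel hw) hne
  · exact .inr rfl

theorem cycleGraph_eq_top_of_le_three : ∀ {n : ℕ}, n ≤ 3 → SimpleGraph.cycleGraph n = ⊤
  | 0, _ => SimpleGraph.cycleGraph_zero_eq_top
  | 1, _ => SimpleGraph.cycleGraph_one_eq_top
  | 2, _ => SimpleGraph.cycleGraph_two_eq_top
  | 3, _ => SimpleGraph.cycleGraph_three_eq_top

namespace Is3GoodColoring

theorem mono {V : Type*} {G : SimpleGraph V} {k l : ℕ} {f : V → Finset ℕ} (hkl : k ≤ l)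
    (hf : Is3GoodColoring G k f) : Is3GoodColoring G l f :=
  ⟨fun v ↦ ⟨(hf.1 v).1.trans (Finset.Icc_subset_Icc_right hkl), (hf.1 v).2⟩, hf.2⟩

theorem top (n : ℕ) :
    Is3GoodColoring (⊤ : SimpleGraph (Fin n)) (3 * n)
      fun i ↦ Finset.Icc (3 * i + 1) (3 * i + 3) := by
  refine ⟨fun i ↦ ⟨Finset.Icc_subset_Icc (by omega) (by omega), by simp⟩, fun i j hij ↦ ?_,
    fun i j hij ↦ ?_⟩
  · have hne : i.val ≠ j.val := Fin.val_ne_of_ne hij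
    ext c
    simp only [Finset.mem_inter, Finset.mem_Icc, Finset.notMem_empty, iff_false]
    omega
  · rw [SimpleGraph.dist_top] at hij
    split_ifs at hij
    omega

theorem cycleGraph_of_isGoodWindow {k n : ℕ} {f : Fin (n + 2) → Finset ℕ}
    (hf : ∀ i, IsGoodWindow k (f i) (f (i + 1)) (f (i + 1 + 1))) :
    Is3GoodColoring (SimpleGraph.cycleGraph (n + 2)) k f := by
  refine ⟨fun i ↦ (hf i).1, fun u v huv ↦ ?_, fun u v huv ↦ ?_⟩
  · obtain rfl | rfl := cycleGraph_adj_iff_eq_add_one_s7.mp huv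
    · rw [Finset.inter_comm]
      exact (hf v).2.1
    · exact (hf u).2.1
  · obtain rfl | rfl := eq_add_one_add_one_of_cycleGraph_dist_eq_two huv
    · rw [Finset.inter_comm]
      exact (hf v).2.2
    · exact (hf u).2.2

end Is3GoodColoring

theorem stmt7_general (n : ℕ) :
    ∃ f : Fin n → Finset ℕ, Is3GoodColoring (SimpleGraph.cycleGraph n) 10 f := by
  obtain hn | hn : n ≤ 3 ∨ 4 ≤ n := by omega
  · rw [cycleGraph_eq_top_of_le_three hn]
    exact ⟨_, (Is3GoodColoring.top n).mono (by omega)⟩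
  · obtain ⟨g, hg⟩ := IsClosedChain.exists_of_four_le ⟨_, isClosedChain_four⟩
      ⟨_, isClosedChain_five⟩ ⟨_, isClosedChain_six⟩ ⟨_, isClosedChain_seven⟩ n hn
    obtain ⟨m, rfl⟩ : ∃ m, n = m + 2 := ⟨n - 2, by omega⟩
    exact ⟨fun i ↦ g i, .cycleGraph_of_isGoodWindow hg.window_fin⟩

/-- For every `n ≥ 3`, the cycle `C_n` admits a 3-good 11-coloring. -/
theorem stmt7 (n : ℕ) (hn : 3 ≤ n) :
    ∃ f : Fin n → Finset ℕ, Is3GoodColoring (SimpleGraph.cycleGraph n) 11 f := by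
  exact (stmt7_general n).imp fun _ hf ↦ hf.mono (by omega)
end

section
/- For every finite tree T with at least two vertices and maximum degree Δ, the 2-tone chromatic number of T equals ⌈(5 + √(8Δ + 1))/2⌉. -/
/-!
A 2-tone `k`-coloring is the same thing as a locally injective homomorphism to the Kneser graph of
2-subsets of `{1, …, k}`: vertices at distance 1 get disjoint pairs, vertices at distance 2 get
distinct pairs, and larger distances impose nothing. This Kneser graph is regular of degree
`(k - 2).choose 2`. A locally injective homomorphism cannot decrease degrees, and a forest admits
one to any graph all of whose degrees are at least those of the forest: choose the images of the
neighbours vertex by vertex, moving outwards from a root of each component. So a 2-tone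
`k`-coloring of a forest exists exactly when `Δ ≤ (k - 2).choose 2`, and solving this quadratic
inequality for `k` gives the formula.
-/

section Forest

variable {V : Type*} {G : SimpleGraph V}

theorem eq_cons_or_eq_cons_of_isAcyclic (hG : G.IsAcyclic) {u v r : V} (h : G.Adj u v)
    {p : G.Walk u r} {q : G.Walk v r} (hp : p.IsPath) (hq : q.IsPath) :
    p = .cons h q ∨ q = .cons h.symm p := by
  have isPath_unique {w : V} {p₁ p₂ : G.Walk w r} (h₁ : p₁.IsPath) (h₂ : p₂.IsPath) : p₁ = p₂ :=
    congrArg Subtype.val ((hG.subsingleton_path w r).elim ⟨p₁, h₁⟩ ⟨p₂, h₂⟩)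
  by_cases hu : u ∈ q.support
  · have hv : v ∉ p.support := by
      simpa using hG.ne_mem_support_of_support_of_adj_of_isPath hq.reverse hp.reverse h.symm
        (by simpa using hu)
    exact .inr (isPath_unique hq (hp.cons hv))
  · exact .inl (isPath_unique hp (hq.cons hu))

variable {X : V → Type*}

/-- Transport of a choice of data back along a walk: start with `start r` at the end `r` of the walk
and apply `next` once for each edge, until the first vertex of the walk is reached. -/
def transportAlong (start : ∀ v, X v) (next : ∀ {u v}, G.Adj u v → X v → X u) :
    ∀ {v r}, G.Walk v r → X v
  | _, _, .nil => start _
  | _, _, .cons h p => next h (transportAlong start next p)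

theorem exists_compatible_choice_of_isAcyclic (hG : G.IsAcyclic) [∀ v, Nonempty (X v)]
    {R : ∀ u v, X u → X v → Prop} (symm : ∀ {u v x y}, R u v x y → R v u y x)
    (exists_extension : ∀ {u v}, G.Adj u v → ∀ x : X v, ∃ y : X u, R u v y x) :
    ∃ s : ∀ v, X v, ∀ u v, G.Adj u v → R u v (s u) (s v) := by
  choose next next_compatible using @exists_extension
  let transport {v r} (p : G.Walk v r) := transportAlong (fun _ ↦ Classical.arbitrary _) next p
  let root (v : V) : V := (G.connectedComponentMk v).out
  have reachable_root (v : V) : G.Reachable v (root v) :=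
    (SimpleGraph.ConnectedComponent.exact (Quot.out_eq _)).symm
  choose path path_isPath using fun v ↦ (reachable_root v).exists_isPath
  have transport_compatible {u v r r'} (h : G.Adj u v) (hr : r = r') {p : G.Walk u r}
      {q : G.Walk v r'} (hp : p.IsPath) (hq : q.IsPath) : R u v (transport p) (transport q) := by
    subst hr
    obtain rfl | rfl := eq_cons_or_eq_cons_of_isAcyclic hG h hp hq
    · exact next_compatible h _
    · exact symm (next_compatible h.symm _)
  refine ⟨fun v ↦ transport (path v), fun u v h ↦
    transport_compatible h ?_ (path_isPath u) (path_isPath v)⟩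
  exact congrArg Quot.out (SimpleGraph.ConnectedComponent.sound h.reachable)

end Forest

section LocallyInjective

variable {V W : Type*} {G : SimpleGraph V} {H : SimpleGraph W}

/-- A graph homomorphism is locally injective if it is injective on the neighbourhood of each
vertex. -/
def IsLocallyInjectiveHom (φ : G →g H) : Prop :=
  ∀ v, Set.InjOn φ (G.neighborSet v)

theorem IsLocallyInjectiveHom.degree_le {φ : G →g H} (hφ : IsLocallyInjectiveHom φ) (v : V)
    [Fintype (G.neighborSet v)] [Fintype (H.neighborSet (φ v))] :
    G.degree v ≤ H.degree (φ v) := by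
  rw [← G.card_neighborFinset_eq_degree, ← H.card_neighborFinset_eq_degree]
  refine Finset.card_le_card_of_injOn φ (fun u hu ↦ ?_) (by simpa using hφ v)
  have hvu : G.Adj v u := by simpa using hu
  simpa using φ.map_adj hvu

/-- The data a locally injective homomorphism `G →g H` induces at a single vertex `v`: the image of
`v`, and an injection of the neighbours of `v` into the neighbours of that image. -/
structure StarEmbedding (G : SimpleGraph V) (H : SimpleGraph W) (v : V) where
  center : W
  leaves : G.neighborSet v ↪ H.neighborSet center

/-- Star embeddings at two vertices are compatible if, when the vertices are adjacent, each of them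
sends the other vertex to where the star embedding at that vertex sends it. -/
def StarEmbedding.Compatible {u v : V} (S : StarEmbedding G H u) (T : StarEmbedding G H v) : Prop :=
  ∀ h : G.Adj u v, S.leaves ⟨v, h⟩ = T.center ∧ T.leaves ⟨u, h.symm⟩ = S.center

theorem StarEmbedding.Compatible.symm {u v : V} {S : StarEmbedding G H u} {T : StarEmbedding G H v}
    (h : S.Compatible T) : T.Compatible S :=
  fun huv ↦ (h huv.symm).symm

theorem exists_embedding_apply_eq {α β : Type*} [Fintype α] [Fintype β]
    (h : Fintype.card α ≤ Fintype.card β) (a : α) (b : β) : ∃ e : α ↪ β, e a = b := by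
  classical
  obtain ⟨e⟩ := Function.Embedding.nonempty_of_card_le h
  exact ⟨e.setValue a b, e.setValue_eq a b⟩

variable [G.LocallyFinite] [H.LocallyFinite]

theorem nonempty_starEmbedding [Nonempty W] (hdeg : ∀ v w, G.degree v ≤ H.degree w) (v : V) :
    Nonempty (StarEmbedding G H v) := by
  let w : W := Classical.arbitrary W
  obtain ⟨e⟩ : Nonempty (G.neighborSet v ↪ H.neighborSet w) :=
    Function.Embedding.nonempty_of_card_le
      (by simpa only [SimpleGraph.card_neighborSet_eq_degree] using hdeg v w)
  exact ⟨⟨w, e⟩⟩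

theorem StarEmbedding.exists_compatible (hdeg : ∀ v w, G.degree v ≤ H.degree w) {u v : V}
    (h : G.Adj u v) (T : StarEmbedding G H v) : ∃ S : StarEmbedding G H u, S.Compatible T := by
  let w := T.leaves ⟨u, h.symm⟩
  obtain ⟨e, he⟩ : ∃ e : G.neighborSet u ↪ H.neighborSet w, e ⟨v, h⟩ = ⟨T.center, w.2.symm⟩ :=
    exists_embedding_apply_eq
      (by simpa only [SimpleGraph.card_neighborSet_eq_degree] using hdeg u w) _ _
  exact ⟨⟨w, e⟩, fun _ ↦ ⟨congrArg Subtype.val he, rfl⟩⟩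

theorem exists_isLocallyInjectiveHom_of_isAcyclic [Nonempty W] (hG : G.IsAcyclic)
    (hdeg : ∀ v w, G.degree v ≤ H.degree w) :
    ∃ φ : G →g H, IsLocallyInjectiveHom φ := by
  have := nonempty_starEmbedding (G := G) hdeg
  obtain ⟨S, hS⟩ := exists_compatible_choice_of_isAcyclic hG
    (R := fun _ _ (S T : StarEmbedding G H _) ↦ S.Compatible T)
    StarEmbedding.Compatible.symm (StarEmbedding.exists_compatible hdeg)
  have center_eq {u v : V} (h : G.Adj u v) : (S v).center = (S u).leaves ⟨v, h⟩ :=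
    (hS u v h h).1.symm
  refine ⟨⟨fun v ↦ (S v).center, fun {u v} h ↦ ?_⟩, fun p u hu v hv huv ↦ ?_⟩
  · rw [center_eq h]
    exact ((S u).leaves ⟨v, h⟩).2
  · have leaves_eq : (S p).leaves ⟨u, hu⟩ = (S p).leaves ⟨v, hv⟩ :=
      Subtype.ext ((center_eq hu).symm.trans (huv.trans (center_eq hv)))
    exact congrArg Subtype.val ((S p).leaves.injective leaves_eq)

end LocallyInjective

section Kneser

variable {α : Type*}

/-- The Kneser graph on the `t`-element subsets of `s`, with disjoint subsets adjacent. Requiring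
`A ≠ B` only matters for `t = 0`, where it removes the loop at `∅`. -/
def kneserGraph (s : Finset α) (t : ℕ) : SimpleGraph (s.powersetCard t) where
  Adj A B := A ≠ B ∧ Disjoint A.1 B.1
  symm := ⟨fun _ _ h ↦ ⟨h.1.symm, h.2.symm⟩⟩
  loopless := ⟨fun _ h ↦ h.1 rfl⟩

variable {s : Finset α} {t : ℕ}

theorem kneserGraph_adj_iff_disjoint (ht : t ≠ 0) {A B : s.powersetCard t} :
    (kneserGraph s t).Adj A B ↔ Disjoint A.1 B.1 := by
  refine ⟨And.right, fun h ↦ ⟨?_, h⟩⟩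
  rintro rfl
  have hA := (Finset.mem_powersetCard.1 A.2).2
  rw [disjoint_self.1 h, Finset.bot_eq_empty, Finset.card_empty] at hA
  exact ht hA.symm

theorem degree_kneserGraph (ht : t ≠ 0) (A : s.powersetCard t)
    [Fintype ((kneserGraph s t).neighborSet A)] :
    (kneserGraph s t).degree A = (s.card - t).choose t := by
  classical
  obtain ⟨hAs, hAt⟩ := Finset.mem_powersetCard.1 A.2
  have neighbors_eq : ((kneserGraph s t).neighborFinset A).map (.subtype _) =
      (s \ A.1).powersetCard t := by
    ext B
    simp only [Finset.mem_map, SimpleGraph.mem_neighborFinset, kneserGraph_adj_iff_disjoint ht,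
      Function.Embedding.subtype_apply, Subtype.exists, Finset.mem_powersetCard,
      Finset.subset_sdiff, disjoint_comm]
    grind
  rw [← SimpleGraph.card_neighborFinset_eq_degree, ← Finset.card_map, neighbors_eq,
    Finset.card_powersetCard, Finset.card_sdiff_of_subset hAs, hAt]

end Kneser

section ToneColoring

variable {V : Type*} {G : SimpleGraph V} {t k : ℕ} {f : V → Finset ℕ}

theorem IsTToneColoring.disjoint_of_adj_s8 (hf : IsTToneColoring G t k f) {u v : V}
    (h : G.Adj u v) : Disjoint (f u) (f v) := by
  have hlt := hf.2 u v h.ne h.reachable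
  rwa [SimpleGraph.dist_eq_one_iff_adj.2 h, Nat.lt_one_iff, Finset.card_eq_zero,
    ← Finset.disjoint_iff_inter_eq_empty] at hlt

theorem IsTToneColoring.injOn_neighborSet (hf : IsTToneColoring G t k f) (ht : 2 ≤ t) (p : V) :
    Set.InjOn f (G.neighborSet p) := by
  intro u (hu : G.Adj p u) v (hv : G.Adj p v) huv
  by_contra hne
  have hdist : G.dist u v ≤ 2 := SimpleGraph.dist_le (.cons hu.symm (.cons hv .nil))
  have hlt := hf.2 u v hne (hu.symm.reachable.trans hv.reachable)
  rw [huv, Finset.inter_self, (hf.1 v).2] at hlt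
  omega

theorem isTToneColoring_two_of_disjoint_of_injOn
    (hcard : ∀ v, f v ⊆ Finset.Icc 1 k ∧ (f v).card = 2)
    (hadj : ∀ u v, G.Adj u v → Disjoint (f u) (f v))
    (hinj : ∀ p, Set.InjOn f (G.neighborSet p)) : IsTToneColoring G 2 k f := by
  refine ⟨hcard, fun u v huv hreach ↦ ?_⟩
  by_cases h : G.Adj u v
  · simp [SimpleGraph.dist_eq_one_iff_adj.2 h, Finset.disjoint_iff_inter_eq_empty.1 (hadj u v h)]
  have one_lt_dist : 1 < G.dist u v := hreach.one_lt_dist_of_ne_of_not_adj huv h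
  have card_inter_le : (f u ∩ f v).card ≤ 2 :=
    (Finset.card_le_card Finset.inter_subset_left).trans_eq (hcard u).2
  by_contra! hle
  have inter_eq : f u ∩ f v = f u :=
    Finset.eq_of_subset_of_card_le Finset.inter_subset_left (by rw [(hcard u).2]; omega)
  have f_eq : f u = f v :=
    Finset.eq_of_subset_of_card_le (Finset.inter_eq_left.1 inter_eq)
      (by rw [(hcard u).2, (hcard v).2])
  have edist_eq_two : G.edist u v = 2 := by
    rw [← hreach.coe_dist_eq_edist, show G.dist u v = 2 by omega, Nat.cast_ofNat]
  obtain ⟨p, hup, hvp⟩ := (SimpleGraph.edist_eq_two_iff.1 edist_eq_two).2.2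
  exact huv (hinj p hup.symm hvp.symm f_eq)

theorem exists_isTToneColoring_two_iff_exists_isLocallyInjectiveHom :
    (∃ f, IsTToneColoring G 2 k f) ↔
      ∃ φ : G →g kneserGraph (Finset.Icc 1 k) 2, IsLocallyInjectiveHom φ := by
  constructor
  · rintro ⟨f, hf⟩
    refine ⟨⟨fun v ↦ ⟨f v, Finset.mem_powersetCard.2 (hf.1 v)⟩, fun h ↦ ?_⟩,
      fun p u hu v hv huv ↦ ?_⟩
    · exact (kneserGraph_adj_iff_disjoint two_ne_zero).2 (hf.disjoint_of_adj_s8 h)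
    · exact hf.injOn_neighborSet le_rfl p hu hv (congrArg Subtype.val huv)
  · rintro ⟨φ, hφ⟩
    exact ⟨fun v ↦ φ v, isTToneColoring_two_of_disjoint_of_injOn
      (fun v ↦ Finset.mem_powersetCard.1 (φ v).2) (fun u v h ↦ (φ.map_adj h).2)
      (fun p ↦ Subtype.val_injective.comp_injOn (hφ p))⟩

theorem exists_isTToneColoring_two_iff_le_choose [G.LocallyFinite] (hG : G.IsAcyclic) {Δ : ℕ}
    (hΔ : IsGreatest (Set.range fun v ↦ G.degree v) Δ) (hΔ₀ : 0 < Δ) :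
    (∃ f, IsTToneColoring G 2 k f) ↔ Δ ≤ (k - 2).choose 2 := by
  let : (kneserGraph (Finset.Icc 1 k) 2).LocallyFinite := fun _ ↦ Fintype.ofFinite _
  have degree_eq (A) : (kneserGraph (Finset.Icc 1 k) 2).degree A = (k - 2).choose 2 := by
    simpa using degree_kneserGraph two_ne_zero A
  rw [exists_isTToneColoring_two_iff_exists_isLocallyInjectiveHom]
  constructor
  · rintro ⟨φ, hφ⟩
    obtain ⟨v, rfl⟩ := hΔ.1
    exact (hφ.degree_le v).trans_eq (degree_eq (φ v))
  · intro hle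
    have two_le_sub : 2 ≤ k - 2 := Nat.choose_ne_zero_iff.1 (hΔ₀.trans_le hle).ne'
    have two_le_card : 2 ≤ (Finset.Icc 1 k).card := by
      rw [Nat.card_Icc]
      omega
    have := (Finset.powersetCard_nonempty.2 two_le_card).to_subtype
    refine exists_isLocallyInjectiveHom_of_isAcyclic hG fun v A ↦ ?_
    exact (hΔ.2 ⟨v, rfl⟩).trans (hle.trans_eq (degree_eq A).symm)

end ToneColoring

theorem ceil_five_add_sqrt_div_two_le_iff {D : ℕ} (hD : 0 < D) (k : ℕ) :
    ⌈(5 + √(8 * (D : ℝ) + 1)) / 2⌉₊ ≤ k ↔ D ≤ (k - 2).choose 2 := by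
  rw [Nat.ceil_le]
  obtain hk | hk := lt_or_ge k 3
  · have lhs_false : ¬ (5 + √(8 * (D : ℝ) + 1)) / 2 ≤ k := by
      have hk' : (k : ℝ) ≤ 2 := by exact_mod_cast Nat.le_of_lt_succ hk
      have := Real.sqrt_nonneg (8 * (D : ℝ) + 1)
      linarith
    have rhs_false : ¬ D ≤ (k - 2).choose 2 := by
      rw [Nat.choose_eq_zero_of_lt (by omega)]
      omega
    exact iff_of_false lhs_false rhs_false
  · obtain ⟨m, rfl⟩ := Nat.exists_eq_add_of_le' hk
    calc (5 + √(8 * (D : ℝ) + 1)) / 2 ≤ (m + 3 : ℕ)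
      _ ↔ √(8 * (D : ℝ) + 1) ≤ 2 * m + 1 := by push_cast; constructor <;> intro h <;> linarith
      _ ↔ 8 * (D : ℝ) + 1 ≤ (2 * m + 1) ^ 2 := Real.sqrt_le_left (by positivity)
      _ ↔ (D : ℝ) ≤ (m + 1).choose 2 := by
        rw [Nat.cast_choose_two]; push_cast; constructor <;> intro h <;> linarith
      _ ↔ D ≤ (m + 3 - 2).choose 2 := Nat.cast_le

theorem stmt8_general {V : Type*} {G : SimpleGraph V} [G.LocallyFinite] (hG : G.IsAcyclic) {Δ : ℕ}
    (hΔ : IsGreatest (Set.range fun v ↦ G.degree v) Δ) (hΔ₀ : 0 < Δ) :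
    toneNumber G 2 = ⌈(5 + √(8 * (Δ : ℝ) + 1)) / 2⌉₊ := by
  have colorable_eq_Ici : {k | ∃ f : V → Finset ℕ, IsTToneColoring G 2 k f} =
      Set.Ici ⌈(5 + √(8 * (Δ : ℝ) + 1)) / 2⌉₊ := by
    ext k
    exact (exists_isTToneColoring_two_iff_le_choose hG hΔ hΔ₀).trans
      (ceil_five_add_sqrt_div_two_le_iff hΔ₀ k).symm
  rw [toneNumber, colorable_eq_Ici, csInf_Ici]

/-- For every finite tree `T` with at least two vertices and maximum degree `Δ`,
`τ₂(T) = ⌈(5 + √(8Δ + 1))/2⌉`. -/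
theorem stmt8 {V : Type*} [Fintype V] (G : SimpleGraph V) [DecidableRel G.Adj]
    (hT : G.IsTree) (hcard : 2 ≤ Fintype.card V) :
    toneNumber G 2 = ⌈(5 + Real.sqrt (8 * (G.maxDegree : ℝ) + 1)) / 2⌉₊ := by
  have : Nontrivial V := Fintype.one_lt_card_iff_nontrivial.1 hcard
  obtain ⟨v, hv⟩ := G.exists_maximal_degree_vertex
  exact stmt8_general hT.isAcyclic
    ⟨⟨v, hv.symm⟩, Set.forall_mem_range.2 G.degree_le_maxDegree⟩
    (hv ▸ hT.connected.preconnected.degree_pos_of_nontrivial v)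
end

section
/- Let G be a finite simple graph, let v be a vertex of G, and let k be a positive integer with k ≥ 2·deg(v) + 2. Suppose f assigns to every vertex u ≠ v a 2-element subset f(u) of {1,…,k} such that |f(u) ∩ f(w)| < d_G(u,w) for all distinct u, w ≠ v in the same component. If the binomial coefficient C(k − 2·deg(v), 2) is strictly greater than the number of vertices at distance exactly two from v in G, then f extends to a 2-tone k-coloring of G by assigning v a 2-element subset of {1,…,k} disjoint from the labels of all neighbors of v and distinct from the label of every vertex at distance exactly two from v. -/
/-!
Deleting the labels of the neighbors of `v` from the palette leaves at least `k - 2 * deg v` colors.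
Each vertex at distance two from `v` rules out at most one pair of the remaining colors, so some
pair survives. Vertices at distance at least three impose nothing, since two labels share at most
two colors.
-/

section LabelSelection

variable {α ι κ : Type*}

theorem card_sub_card_mul_le_card_sdiff_biUnion [DecidableEq α] (C : Finset α) (N : Finset ι)
    (f : ι → Finset α) (m : ℕ) (hf : ∀ i ∈ N, (f i).card ≤ m) :
    C.card - N.card * m ≤ (C \ N.biUnion f).card :=
  calc C.card - N.card * m
    _ ≤ C.card - (N.biUnion f).card :=
        Nat.sub_le_sub_left (Finset.card_biUnion_le_card_mul N f m hf) _
    _ ≤ (C \ N.biUnion f).card := Finset.le_card_sdiff _ _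

theorem exists_mem_powersetCard_forall_ne (C : Finset α) (D : Finset κ) (g : κ → Finset α) (t : ℕ)
    (hD : D.card < C.card.choose t) :
    ∃ s ∈ C.powersetCard t, ∀ j ∈ D, s ≠ g j := by
  classical
  have card_image_lt : (D.image g).card < (C.powersetCard t).card := by
    rw [Finset.card_powersetCard]
    exact Finset.card_image_le.trans_lt hD
  obtain ⟨s, hsC, hsD⟩ := Finset.exists_mem_notMem_of_card_lt_card card_image_lt
  exact ⟨s, hsC, fun j hj hs => hsD (hs ▸ Finset.mem_image_of_mem g hj)⟩

theorem exists_mem_powersetCard_forall_disjoint_forall_ne (C : Finset α) (N : Finset ι)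
    (D : Finset κ) (f : ι → Finset α) (g : κ → Finset α) (m t : ℕ)
    (hf : ∀ i ∈ N, (f i).card ≤ m) (hD : D.card < (C.card - N.card * m).choose t) :
    ∃ s ∈ C.powersetCard t, (∀ i ∈ N, Disjoint s (f i)) ∧ ∀ j ∈ D, s ≠ g j := by
  classical
  have free_colors := card_sub_card_mul_le_card_sdiff_biUnion C N f m hf
  obtain ⟨s, hs, hne⟩ := exists_mem_powersetCard_forall_ne (C \ N.biUnion f) D g t
    (hD.trans_le (Nat.choose_le_choose t free_colors))
  obtain ⟨hsub, hcard⟩ := Finset.mem_powersetCard.mp hs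
  obtain ⟨hsC, hdisj⟩ := Finset.subset_sdiff.mp hsub
  exact ⟨s, Finset.mem_powersetCard.mpr ⟨hsC, hcard⟩,
    (Finset.disjoint_biUnion_right s N f).mp hdisj, hne⟩

theorem card_inter_lt_of_ne_of_card_le [DecidableEq α] {s a : Finset α} (hne : s ≠ a)
    (hcard : a.card ≤ s.card) :
    (s ∩ a).card < s.card := by
  have not_subset : ¬ s ⊆ a := fun h => hne (Finset.eq_of_subset_of_card_le h hcard)
  exact Finset.card_lt_card
    (Finset.inter_subset_left.ssubset_of_ne (Finset.inter_eq_left.not.mpr not_subset))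

end LabelSelection

/-- A partial `t`-tone `k`-coloring: `f` labels the vertices of `S`, with the values of `f` outside
`S` ignored. Distances and components are those of `G`, not of the subgraph induced on `S`. -/
def IsTToneColoringOn {V : Type*} (G : SimpleGraph V) (t k : ℕ) (f : V → Finset ℕ) (S : Set V) :
    Prop :=
  (∀ u ∈ S, f u ⊆ Finset.Icc 1 k ∧ (f u).card = t) ∧
  ∀ u ∈ S, ∀ w ∈ S, u ≠ w → G.Reachable u w → (f u ∩ f w).card < G.dist u w

section Extension

variable {V : Type*} {G : SimpleGraph V} {t k : ℕ} {f : V → Finset ℕ} {S : Set V} {u v : V}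

theorem isTToneColoringOn_univ :
    IsTToneColoringOn G t k f Set.univ ↔ IsTToneColoring G t k f := by
  simp [IsTToneColoringOn, IsTToneColoring]

theorem IsTToneColoringOn.update_insert [DecidableEq V] {s : Finset ℕ}
    (hf : IsTToneColoringOn G t k f S) (hv : v ∉ S) (hs : s ⊆ Finset.Icc 1 k ∧ s.card = t)
    (hdist : ∀ u ∈ S, G.Reachable v u → (s ∩ f u).card < G.dist v u) :
    IsTToneColoringOn G t k (Function.update f v s) (insert v S) := by
  have update_eq : ∀ u ∈ S, Function.update f v s u = f u := fun u hu =>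
    Function.update_of_ne (ne_of_mem_of_not_mem hu hv) s f
  constructor
  · rintro u (rfl | hu)
    · rwa [Function.update_self]
    · rw [update_eq u hu]
      exact hf.1 u hu
  · rintro u (rfl | hu) w (rfl | hw) huw hreach
    · exact absurd rfl huw
    · rw [Function.update_self, update_eq w hw]
      exact hdist w hw hreach
    · rw [Function.update_self, update_eq u hu, Finset.inter_comm, SimpleGraph.dist_comm]
      exact hdist u hu hreach.symm
    · rw [update_eq u hu, update_eq w hw]
      exact hf.2 u hu w hw huw hreach

theorem card_inter_lt_dist_of_card_eq_two {α : Type*} [DecidableEq α] {s a : Finset α}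
    (hvu : v ≠ u) (hreach : G.Reachable v u) (hs : s.card = 2) (ha : a.card = 2)
    (hadj : G.Adj v u → Disjoint s a) (hdist : G.dist v u = 2 → s ≠ a) :
    (s ∩ a).card < G.dist v u := by
  have dist_pos : 0 < G.dist v u := hreach.pos_dist_of_ne hvu
  obtain dist_one | dist_two | two_lt :
      G.dist v u = 1 ∨ G.dist v u = 2 ∨ 2 < G.dist v u := by omega
  · have disj := hadj (SimpleGraph.dist_eq_one_iff_adj.mp dist_one)
    rwa [Finset.disjoint_iff_inter_eq_empty.mp disj, Finset.card_empty]
  · rw [dist_two, ← hs]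
    exact card_inter_lt_of_ne_of_card_le (hdist dist_two) (ha.trans hs.symm).le
  · exact ((Finset.card_le_card Finset.inter_subset_left).trans hs.le).trans_lt two_lt

end Extension

theorem stmt16_general {V : Type*} [DecidableEq V] (G : SimpleGraph V) (v : V)
    [Fintype (G.neighborSet v)] [Finite {u : V // G.dist v u = 2}] (k : ℕ) (f : V → Finset ℕ)
    (hf : IsTToneColoringOn G 2 k f {v}ᶜ)
    (hcount : Nat.card {u : V // G.dist v u = 2} < (k - 2 * G.degree v).choose 2) :
    ∃ s : Finset ℕ, s ⊆ Finset.Icc 1 k ∧ s.card = 2 ∧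
      (∀ u : V, G.Adj v u → s ∩ f u = ∅) ∧
      (∀ u : V, G.dist v u = 2 → s ≠ f u) ∧
      IsTToneColoring G 2 k (Function.update f v s) := by
  have := Fintype.ofFinite {u : V // G.dist v u = 2}
  obtain ⟨s, hs, hadj, hdist⟩ := exists_mem_powersetCard_forall_disjoint_forall_ne
    (Finset.Icc 1 k) (G.neighborFinset v) (Finset.univ : Finset {u : V // G.dist v u = 2})
    f (fun u => f u) 2 2
    (fun u hu => (hf.1 u ((G.mem_neighborFinset v u).mp hu).ne').2.le)
    (by simpa [mul_comm] using hcount)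
  obtain ⟨hsub, hcard⟩ := Finset.mem_powersetCard.mp hs
  replace hadj : ∀ u, G.Adj v u → Disjoint s (f u) := fun u hu =>
    hadj u ((G.mem_neighborFinset v u).mpr hu)
  replace hdist : ∀ u, G.dist v u = 2 → s ≠ f u := fun u hu => hdist ⟨u, hu⟩ (Finset.mem_univ _)
  have extended := hf.update_insert (by simp) ⟨hsub, hcard⟩ fun u hu hreach =>
    card_inter_lt_dist_of_card_eq_two (Ne.symm hu) hreach hcard (hf.1 u hu).2 (hadj u) (hdist u)
  rw [Set.insert_eq, Set.union_compl_self] at extended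
  exact ⟨s, hsub, hcard, fun u hu => Finset.disjoint_iff_inter_eq_empty.mp (hadj u hu), hdist,
    isTToneColoringOn_univ.mp extended⟩

/-- Extension lemma for partial 2-tone colorings: if `f` is a partial 2-tone
`k`-coloring defined on all vertices other than `v`, with `k ≥ 2·deg(v) + 2`,
and the number of candidate labels `C(k − 2·deg(v), 2)` exceeds the number of
vertices at distance exactly two from `v`, then `f` extends to a 2-tone
`k`-coloring of `G` by assigning `v` a 2-element subset of `{1,…,k}` disjoint
from the labels of all neighbors of `v` and distinct from the label of every
vertex at distance exactly two from `v`. -/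
theorem stmt16 {V : Type*} [Fintype V] [DecidableEq V] (G : SimpleGraph V)
    [DecidableRel G.Adj] (v : V) (k : ℕ) (hk : 2 * G.degree v + 2 ≤ k)
    (f : V → Finset ℕ)
    (hlab : ∀ u : V, u ≠ v → f u ⊆ Finset.Icc 1 k ∧ (f u).card = 2)
    (hpart : ∀ u w : V, u ≠ w → u ≠ v → w ≠ v → G.Reachable u w →
      ((f u) ∩ (f w)).card < G.dist u w)
    (hcount : Nat.card {u : V // G.dist v u = 2} < (k - 2 * G.degree v).choose 2) :
    ∃ s : Finset ℕ, s ⊆ Finset.Icc 1 k ∧ s.card = 2 ∧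
      (∀ u : V, G.Adj v u → s ∩ f u = ∅) ∧
      (∀ u : V, G.dist v u = 2 → s ≠ f u) ∧
      IsTToneColoring G 2 k (Function.update f v s) :=
  stmt16_general G v k f
    ⟨hlab, fun u hu w hw huw hreach => hpart u w huw hu hw hreach⟩ hcount
end
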